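/- Let d ≥ 2 and let α, β ≥ 0 be real numbers with 0 < α ≤ d and α + (d² − 1)β = d, and set C_α = α (1/d) |I⟩⟩⟨⟨I| + β (I_{d²} − (1/d) |I⟩⟩⟨⟨I|) on ℂ^d ⊗ ℂ^d. Then the minimum, over all finite decompositions C_α = Σ_j |K_j⟩⟩⟨⟨K_j| with K_j ∈ Matrix d d ℂ, of max_j rank(K_j) equals ⌈α⌉, the ceiling of α. -/

import Mathlib

open ComplexOrder

noncomputable section

/-- `dyadM K = |K⟩⟩⟨⟨K|`, the rank-one operator associated with the
vectorization `|K⟩⟩ = ∑ i j, K i j |i⟩⊗|j⟩` of the matrix `K`. -/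
def dyadM {m n : Type} (K : Matrix m n ℂ) : Matrix (m × n) (m × n) ℂ :=
  fun p q => K p.1 p.2 * star (K q.1 q.2)

open Matrix

/-! ### The trace is bounded by the rank and the Frobenius norm -/

lemma re_mul_conjTranspose_apply_self {n : Type*} [Fintype n] (L : Matrix n n ℂ) (a : n) :
    ((L * Lᴴ) a a).re = ∑ b, ‖L a b‖ ^ 2 := by
  rw [Matrix.mul_apply, Complex.re_sum]
  refine Finset.sum_congr rfl fun b _ => ?_
  rw [Matrix.conjTranspose_apply, RCLike.star_def, Complex.mul_conj, Complex.normSq_eq_norm_sq,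
    Complex.ofReal_re]

lemma norm_trace_sq_le_rank_mul {n : Type*} [Fintype n] [DecidableEq n] (K : Matrix n n ℂ) :
    ‖K.trace‖ ^ 2 ≤ K.rank * ∑ i, ∑ j, ‖K i j‖ ^ 2 := by
  have hA : (K * Kᴴ).IsHermitian := isHermitian_mul_conjTranspose_self K
  set U : Matrix n n ℂ := (hA.eigenvectorUnitary : Matrix n n ℂ) with hU
  have hU2 : U * star U = 1 := Unitary.mul_star_self_of_mem hA.eigenvectorUnitary.2
  set L := star U * K * U with hL
  have htr : L.trace = K.trace := by
    rw [hL, Matrix.trace_mul_comm, ← Matrix.mul_assoc, hU2, Matrix.one_mul]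
  have hLL : L * Lᴴ = diagonal (RCLike.ofReal ∘ hA.eigenvalues) := by
    have h := hA.conjStarAlgAut_star_eigenvectorUnitary
    rw [Unitary.conjStarAlgAut_apply] at h
    rw [← h, hL]
    simp only [Matrix.conjTranspose_mul, Matrix.star_eq_conjTranspose,
      Matrix.conjTranspose_conjTranspose, Unitary.coe_star, ← hU]
    simp only [Matrix.star_eq_conjTranspose] at hU2
    simp only [Matrix.mul_assoc]
    rw [← Matrix.mul_assoc U Uᴴ, hU2, Matrix.one_mul]
  have hrow : ∀ a, ∑ b, ‖L a b‖ ^ 2 = hA.eigenvalues a := fun a => by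
    rw [← re_mul_conjTranspose_apply_self, hLL]
    simp
  have hle : ∀ a, ‖L a a‖ ^ 2 ≤ hA.eigenvalues a := fun a => by
    rw [← hrow]
    exact Finset.single_le_sum (f := fun b => ‖L a b‖ ^ 2) (fun _ _ => by positivity)
      (Finset.mem_univ a)
  have hpos : ∀ a, 0 ≤ hA.eigenvalues a := fun a => (sq_nonneg _).trans (hle a)
  set s := Finset.univ.filter fun a => hA.eigenvalues a ≠ 0 with hs
  have hcard : K.rank = s.card := by
    rw [← Matrix.rank_self_mul_conjTranspose, hA.rank_eq_card_non_zero_eigs, Fintype.card_subtype]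
  have hsum : L.trace = ∑ a ∈ s, L a a := by
    rw [Matrix.trace, eq_comm]
    refine Finset.sum_subset (Finset.subset_univ _) fun a _ ha => ?_
    have h0 : hA.eigenvalues a = 0 := by simpa [hs] using ha
    have := hle a
    rw [h0] at this
    simpa using le_antisymm this (sq_nonneg _)
  have hfrob : ∑ i, ∑ j, ‖K i j‖ ^ 2 = ∑ a, hA.eigenvalues a := by
    have h := congrArg Complex.re hA.trace_eq_sum_eigenvalues
    simp only [Matrix.trace, Matrix.diag, Complex.re_sum, re_mul_conjTranspose_apply_self] at h
    simpa using h
  rw [← htr, hsum, hcard, hfrob]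
  calc ‖∑ a ∈ s, L a a‖ ^ 2 ≤ (∑ a ∈ s, ‖L a a‖) ^ 2 := by
        gcongr; exact norm_sum_le _ _
    _ ≤ s.card * ∑ a ∈ s, ‖L a a‖ ^ 2 := sq_sum_le_card_mul_sum_sq
    _ ≤ s.card * ∑ a, hA.eigenvalues a := by
        gcongr
        exact (Finset.sum_le_sum fun a _ => hle a).trans
          (Finset.sum_le_univ_sum_of_nonneg hpos)

lemma sum_dyadM_diag {n : Type} [Fintype n] (K : Matrix n n ℂ) :
    ∑ i, ∑ k, dyadM K (i, i) (k, k) = ((‖K.trace‖ ^ 2 : ℝ) : ℂ) := by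
  simp only [dyadM, ← Finset.mul_sum, ← Finset.sum_mul, ← star_sum]
  rw [← Complex.normSq_eq_norm_sq, ← Complex.mul_conj]
  rfl

lemma trace_dyadM {n : Type} [Fintype n] (K : Matrix n n ℂ) :
    (dyadM K).trace = ((∑ i, ∑ j, ‖K i j‖ ^ 2 : ℝ) : ℂ) := by
  simp [Matrix.trace, dyadM, Fintype.sum_prod_type, Complex.mul_conj, Complex.normSq_eq_norm_sq]

/-! ### The cone generated by dyads of bounded rank -/

/-- Finite sums of dyads `|K⟩⟩⟨⟨K|` with `K` of rank at most `r`. -/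
def dyadCone (n : Type) [Fintype n] (r : ℕ) : AddSubmonoid (Matrix (n × n) (n × n) ℂ) :=
  AddSubmonoid.closure {M | ∃ K : Matrix n n ℂ, K.rank ≤ r ∧ dyadM K = M}

section dyadCone

variable {n : Type} [Fintype n] {r : ℕ}

lemma dyadM_mem_dyadCone {K : Matrix n n ℂ} (hK : K.rank ≤ r) : dyadM K ∈ dyadCone n r :=
  AddSubmonoid.subset_closure ⟨K, hK, rfl⟩

lemma smul_mem_dyadCone {c : ℝ} (hc : 0 ≤ c) {M : Matrix (n × n) (n × n) ℂ}
    (hM : M ∈ dyadCone n r) : (c : ℂ) • M ∈ dyadCone n r := by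
  induction hM using AddSubmonoid.closure_induction with
  | mem M hM =>
    obtain ⟨K, hK, rfl⟩ := hM
    have h : (c : ℂ) • dyadM K = dyadM ((Real.sqrt c : ℂ) • K) := by
      ext p q
      have : (c : ℂ) = (Real.sqrt c : ℂ) * (Real.sqrt c : ℂ) := by
        rw [← Complex.ofReal_mul, Real.mul_self_sqrt hc]
      simp only [dyadM, Matrix.smul_apply, smul_eq_mul, star_mul', RCLike.star_def,
        Complex.conj_ofReal]
      rw [this]
      ring
    rw [h]
    refine dyadM_mem_dyadCone (le_trans ?_ hK)
    classical
    rw [← Matrix.one_mul K, ← Matrix.smul_mul, Matrix.one_mul K]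
    exact Matrix.rank_mul_le_right _ _
  | zero => simp
  | add x y _ _ hx hy => rw [smul_add]; exact add_mem hx hy

lemma exists_sum_dyadM_of_mem_dyadCone {M : Matrix (n × n) (n × n) ℂ} (hM : M ∈ dyadCone n r) :
    ∃ (t : ℕ) (K : Fin t → Matrix n n ℂ), M = ∑ j, dyadM (K j) ∧ ∀ j, (K j).rank ≤ r := by
  induction hM using AddSubmonoid.closure_induction with
  | mem M hM =>
    obtain ⟨K, hK, rfl⟩ := hM
    exact ⟨1, fun _ => K, by simp, fun _ => hK⟩
  | zero => exact ⟨0, Fin.elim0, by simp, fun j => j.elim0⟩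
  | add x y _ _ hx hy =>
    obtain ⟨s, K, rfl, hK⟩ := hx
    obtain ⟨t, L, rfl, hL⟩ := hy
    refine ⟨s + t, Fin.append K L, by simp [Fin.sum_univ_add], fun j => ?_⟩
    refine Fin.addCases (fun i => ?_) (fun i => ?_) j
    · simpa using hK i
    · simpa using hL i

end dyadCone

/-! ### Averaging over diagonal phases -/

/-- The average of `dyadM (U * K * Uᴴ)` over diagonal unitaries `U`. -/
def phaseTwirl {n : Type} [DecidableEq n] (K : Matrix n n ℂ) : Matrix (n × n) (n × n) ℂ :=
  fun p q => if p = q ∨ (p.1 = p.2 ∧ q.1 = q.2) then dyadM K p q else 0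

section phaseTwirl

variable {n : Type} [Fintype n] [DecidableEq n]

lemma sum_stdAddChar_quadruple (i j k l : n) :
    ∑ x : n → ZMod 3, ZMod.stdAddChar (x i - x j - x k + x l) =
      if (i = k ∧ j = l) ∨ (i = j ∧ k = l) then (3 : ℂ) ^ Fintype.card n else 0 := by
  split_ifs with h
  · have h0 : ∀ x : n → ZMod 3, x i - x j - x k + x l = 0 := fun x => by
      rcases h with ⟨rfl, rfl⟩ | ⟨rfl, rfl⟩ <;> ring
    simp only [h0, AddChar.map_zero_eq_one]
    rw [Finset.sum_const, Finset.card_univ, Fintype.card_fun, ZMod.card, nsmul_eq_mul, mul_one]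
    norm_num
  · obtain ⟨y, hy⟩ : ∃ y : n → ZMod 3, y i - y j - y k + y l ≠ 0 := by
      by_contra! hc
      have hi := hc (Pi.single i 1)
      have hj := hc (Pi.single j 1)
      have hk := hc (Pi.single k 1)
      have hl := hc (Pi.single l 1)
      simp only [Pi.single_apply] at hi hj hk hl
      grind
    have hχ : ZMod.stdAddChar (y i - y j - y k + y l) ≠ (1 : ℂ) := fun h1 =>
      hy (ZMod.injective_stdAddChar (h1.trans (AddChar.map_zero_eq_one _).symm))
    have hS : ∑ x : n → ZMod 3, (ZMod.stdAddChar (x i - x j - x k + x l) : ℂ) =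
        ZMod.stdAddChar (y i - y j - y k + y l) *
          ∑ x : n → ZMod 3, (ZMod.stdAddChar (x i - x j - x k + x l) : ℂ) := by
      rw [Finset.mul_sum, ← Equiv.sum_comp (Equiv.addRight y)]
      refine Finset.sum_congr rfl fun x _ => ?_
      rw [← AddChar.map_add_eq_mul]
      congr 1
      simp only [Equiv.coe_addRight, Pi.add_apply]
      ring
    have := sub_eq_zero.mpr hS
    rw [← one_sub_mul] at this
    exact (mul_eq_zero.mp this).resolve_left (sub_ne_zero.mpr hχ.symm)

lemma phaseTwirl_mem_dyadCone {r : ℕ} {K : Matrix n n ℂ} (hK : K.rank ≤ r) :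
    phaseTwirl K ∈ dyadCone n r := by
  let D : (n → ZMod 3) → Matrix n n ℂ := fun x =>
    diagonal (fun i => ZMod.stdAddChar (x i)) * K * diagonal (fun i => ZMod.stdAddChar (-x i))
  have hD : ∀ x, (D x).rank ≤ r := fun x =>
    ((Matrix.rank_mul_le_left _ _).trans (Matrix.rank_mul_le_right _ _)).trans hK
  have hsum : phaseTwirl K = (((3 : ℝ) ^ Fintype.card n)⁻¹ : ℝ) • ∑ x, dyadM (D x) := by
    ext ⟨i, j⟩ ⟨k, l⟩
    have hterm : ∀ x, dyadM (D x) (i, j) (k, l) = dyadM K (i, j) (k, l) *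
        ZMod.stdAddChar (x i - x j - x k + x l) := fun x => by
      simp only [D, dyadM, Matrix.diagonal_mul, Matrix.mul_diagonal, star_mul', RCLike.star_def,
        ← AddChar.map_neg_eq_conj]
      rw [sub_eq_add_neg, sub_eq_add_neg, AddChar.map_add_eq_mul, AddChar.map_add_eq_mul,
        AddChar.map_add_eq_mul, neg_neg]
      ring
    simp only [Matrix.smul_apply, Matrix.sum_apply, hterm, ← Finset.mul_sum,
      sum_stdAddChar_quadruple, phaseTwirl, Prod.mk.injEq]
    split_ifs
    · simp [mul_comm]
    · simp
  rw [hsum]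
  exact smul_mem_dyadCone (by positivity) (sum_mem fun x _ => dyadM_mem_dyadCone (hD x))

end phaseTwirl

/-! ### Second moments of a random subset -/

section moments

variable {n : Type} [Fintype n] [DecidableEq n]

/-- The number of permutations sending both `i` and `j` into `S`. -/
def permMoment (S : Finset n) (i j : n) : ℂ :=
  ∑ π : Equiv.Perm n, (if π i ∈ S then 1 else 0) * (if π j ∈ S then 1 else 0)

lemma permMoment_perm (S : Finset n) (τ : Equiv.Perm n) (i j : n) :
    permMoment S (τ i) (τ j) = permMoment S i j := by
  unfold permMoment
  rw [← Equiv.sum_comp (Equiv.mulRight τ⁻¹)]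
  simp

lemma sum_ite_perm_mem (S : Finset n) (π : Equiv.Perm n) :
    ∑ i, (if π i ∈ S then (1 : ℂ) else 0) = S.card := by
  rw [Equiv.sum_comp π (fun i => if i ∈ S then (1 : ℂ) else 0)]
  simp

lemma permMoment_self (S : Finset n) (i : n) :
    permMoment S i i = (Fintype.card n).factorial * (S.card / Fintype.card n) := by
  have hc : ∀ a, permMoment S a a = permMoment S i i := fun a => by
    simpa using permMoment_perm S (Equiv.swap i a) i i
  have h : ∑ a, permMoment S a a = (Fintype.card n).factorial * S.card := by
    unfold permMoment
    rw [Finset.sum_comm]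
    have hsq : ∀ (p : Prop) [Decidable p],
        (if p then (1 : ℂ) else 0) * (if p then 1 else 0) = if p then 1 else 0 := fun p _ => by
      split_ifs <;> simp
    simp_rw [hsq, sum_ite_perm_mem]
    simp [Fintype.card_perm]
  simp only [hc, Finset.sum_const, Finset.card_univ, nsmul_eq_mul] at h
  have : (Fintype.card n : ℂ) ≠ 0 := by
    exact_mod_cast (Fintype.card_pos_iff.mpr ⟨i⟩).ne'
  field_simp
  linear_combination h

lemma permMoment_ne (S : Finset n) {i j : n} (hij : i ≠ j) :
    permMoment S i j = (Fintype.card n).factorial *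
      (S.card * (S.card - 1) / (Fintype.card n * (Fintype.card n - 1))) := by
  have hc : ∀ a b, a ≠ b → permMoment S a b = permMoment S i j := fun a b hab => by
    obtain ⟨τ, h1, h2⟩ : ∃ τ : Equiv.Perm n, τ i = a ∧ τ j = b := by
      refine ⟨Equiv.swap (Equiv.swap i a j) b * Equiv.swap i a, ?_, by simp⟩
      rw [Equiv.Perm.mul_apply, Equiv.swap_apply_left]
      refine Equiv.swap_apply_of_ne_of_ne (fun h => hij ?_) hab
      apply (Equiv.swap i a).injective
      rw [Equiv.swap_apply_left, ← h]
    rw [← h1, ← h2, permMoment_perm]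
  have h : ∑ a, ∑ b, permMoment S a b = (Fintype.card n).factorial * S.card ^ 2 := by
    have : ∀ a, ∑ b, permMoment S a b =
        ∑ π : Equiv.Perm n, (if π a ∈ S then 1 else 0) * (S.card : ℂ) := fun a => by
      unfold permMoment
      rw [Finset.sum_comm]
      simp_rw [← Finset.mul_sum, sum_ite_perm_mem]
    simp_rw [this]
    rw [Finset.sum_comm]
    simp_rw [← Finset.sum_mul, sum_ite_perm_mem]
    simp [Fintype.card_perm]
    ring
  have h' : ∀ a, ∑ b, permMoment S a b =
      permMoment S i i + (Fintype.card n - 1) * permMoment S i j := fun a => by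
    rw [← Finset.add_sum_erase _ _ (Finset.mem_univ a),
      Finset.sum_congr rfl (fun b hb => hc a b (Finset.ne_of_mem_erase hb).symm),
      permMoment_self, permMoment_self, Finset.sum_const, Finset.card_erase_of_mem
      (Finset.mem_univ a), Finset.card_univ, nsmul_eq_mul,
      Nat.cast_sub (Fintype.card_pos_iff.mpr ⟨i⟩)]
    simp
  simp only [h', Finset.sum_const, Finset.card_univ, nsmul_eq_mul, permMoment_self] at h
  have h0 : (Fintype.card n : ℂ) ≠ 0 := by
    exact_mod_cast (Fintype.card_pos_iff.mpr ⟨i⟩).ne'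
  have h1 : (Fintype.card n : ℂ) - 1 ≠ 0 := by
    rw [sub_ne_zero]
    exact_mod_cast (Fintype.one_lt_card_iff.mpr ⟨i, j, hij⟩).ne'
  field_simp at h ⊢
  linear_combination h

lemma permMoment_eq (hn : 2 ≤ Fintype.card n) (S : Finset n) (i j : n) :
    permMoment S i j = (Fintype.card n).factorial / (Fintype.card n * (Fintype.card n - 1)) *
      (S.card * (S.card - 1) + if i = j then (S.card * (Fintype.card n - S.card) : ℂ) else 0) := by
  have h0 : (Fintype.card n : ℂ) ≠ 0 := by
    exact_mod_cast (by omega : Fintype.card n ≠ 0)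
  have h1 : (Fintype.card n : ℂ) - 1 ≠ 0 := by
    rw [sub_ne_zero]
    exact_mod_cast (by omega : Fintype.card n ≠ 1)
  split_ifs with h
  · subst h
    rw [permMoment_self]
    field_simp
    ring
  · rw [permMoment_ne S h]
    field_simp
    ring

lemma sum_perm_mul_star (hn : 2 ≤ Fintype.card n) (S : Finset n) (z w : n → ℂ) :
    ∑ π : Equiv.Perm n, (∑ m, (if π m ∈ S then 1 else 0) * z m) *
        star (∑ m, (if π m ∈ S then 1 else 0) * w m) =
      (Fintype.card n).factorial / (Fintype.card n * (Fintype.card n - 1)) *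
        (S.card * (S.card - 1) * ((∑ m, z m) * star (∑ m, w m)) +
          S.card * (Fintype.card n - S.card) * ∑ m, z m * star (w m)) := by
  have h : ∀ π : Equiv.Perm n, (∑ m, (if π m ∈ S then 1 else 0) * z m) *
        star (∑ m, (if π m ∈ S then 1 else 0) * w m) = ∑ a, ∑ b, z a * star (w b) *
          ((if π a ∈ S then 1 else 0) * (if π b ∈ S then 1 else 0)) := fun π => by
    rw [star_sum, Finset.sum_mul_sum]
    refine Finset.sum_congr rfl fun a _ => Finset.sum_congr rfl fun b _ => ?_
    rw [star_mul']
    split_ifs <;> simp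
  simp_rw [h]
  rw [Finset.sum_comm]
  have h' : ∀ a, ∑ π : Equiv.Perm n, ∑ b, z a * star (w b) *
        ((if π a ∈ S then 1 else 0) * (if π b ∈ S then 1 else 0)) =
      ∑ b, z a * star (w b) * permMoment S a b := fun a => by
    rw [Finset.sum_comm]
    simp_rw [← Finset.mul_sum, permMoment]
  simp_rw [h', permMoment_eq hn, mul_add, mul_ite, mul_zero, Finset.sum_add_distrib,
    Finset.sum_ite_eq, Finset.mem_univ, if_true]
  rw [star_sum, Finset.sum_mul_sum]
  simp_rw [Finset.mul_sum]
  congr 1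
  · exact Finset.sum_congr rfl fun a _ => Finset.sum_congr rfl fun b _ => by ring
  · exact Finset.sum_congr rfl fun a _ => by ring

end moments

/-! ### Isotropic operators in the cone -/

lemma exists_hadamard (n : Type) [Fintype n] [DecidableEq n] [Nonempty n] :
    ∃ (W : Matrix n n ℂ) (m₀ : n), (∀ i m, W i m * star (W i m) = 1) ∧ (∀ i, W i m₀ = 1) ∧
      ∀ i j, ∑ m, W i m * star (W j m) = if i = j then (Fintype.card n : ℂ) else 0 := by
  have : NeZero (Fintype.card n) := ⟨Fintype.card_ne_zero⟩
  let e : n ≃ ZMod (Fintype.card n) := Fintype.equivOfCardEq (ZMod.card _).symm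
  have hmul : ∀ i j m, (ZMod.stdAddChar (e i * e m) : ℂ) * star (ZMod.stdAddChar (e j * e m) : ℂ) =
      ZMod.stdAddChar (e m * (e i - e j)) := fun i j m => by
    rw [RCLike.star_def, ← AddChar.map_neg_eq_conj, ← AddChar.map_add_eq_mul]
    congr 1
    ring
  refine ⟨fun i m => ZMod.stdAddChar (e i * e m), e.symm 0, fun i m => ?_, fun i => by simp,
    fun i j => ?_⟩
  · rw [hmul]
    simp
  · simp_rw [hmul]
    rw [e.sum_comp (fun x => (ZMod.stdAddChar (x * (e i - e j)) : ℂ)),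
      AddChar.sum_mulShift _ (ZMod.isPrimitive_stdAddChar _)]
    simp [sub_eq_zero, ZMod.card]

lemma dyadM_one_apply {n : Type} [DecidableEq n] (i j k l : n) :
    dyadM (1 : Matrix n n ℂ) (i, j) (k, l) = if i = j ∧ k = l then 1 else 0 := by
  simp only [dyadM, Matrix.one_apply]
  split_ifs <;> simp_all

section isotropic

variable {n : Type} [Fintype n] [DecidableEq n]

lemma card_smul_one_sub_dyadM_one_mem_dyadCone {r : ℕ} (hr : 1 ≤ r) :
    (Fintype.card n : ℂ) • (1 : Matrix (n × n) (n × n) ℂ) - dyadM (1 : Matrix n n ℂ) ∈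
      dyadCone n r := by
  rcases isEmpty_or_nonempty n with hn | hn
  · convert zero_mem (dyadCone n r) using 1
    ext ⟨i, _⟩
    exact hn.elim i
  obtain ⟨W, m₀, hW1, hW0, hW⟩ := exists_hadamard n
  have key : (Fintype.card n : ℂ) • (1 : Matrix (n × n) (n × n) ℂ) - dyadM (1 : Matrix n n ℂ) =
      ∑ m ∈ Finset.univ.erase m₀, phaseTwirl (vecMulVec (fun _ => 1) (fun j => W j m)) +
        ∑ p : n × n with p.1 ≠ p.2, dyadM (Matrix.single p.1 p.2 (1 : ℂ)) := by
    ext ⟨i, j⟩ ⟨k, l⟩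
    have hcol : ∑ m ∈ Finset.univ.erase m₀, W j m * star (W l m) =
        (if j = l then (Fintype.card n : ℂ) else 0) - 1 := by
      rw [Finset.sum_erase_eq_sub (Finset.mem_univ _), hW, hW0, hW0, star_one, mul_one]
    have hoff : ∑ p : n × n with p.1 ≠ p.2, dyadM (Matrix.single p.1 p.2 (1 : ℂ)) (i, j) (k, l) =
        if i ≠ j ∧ i = k ∧ j = l then 1 else 0 := by
      have : ∀ p : n × n, dyadM (Matrix.single p.1 p.2 (1 : ℂ)) (i, j) (k, l) =
          if p = (i, j) then (if i = k ∧ j = l then 1 else 0) else 0 := fun p => by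
        simp only [dyadM, Matrix.single_apply, Prod.ext_iff]
        split_ifs <;> simp_all
      simp_rw [this, Finset.sum_ite_eq', Finset.mem_filter]
      simp [← ite_and]
    simp only [Matrix.sub_apply, Matrix.smul_apply, Matrix.add_apply, Matrix.sum_apply, hoff,
      dyadM_one_apply, phaseTwirl, Matrix.one_apply, Prod.mk.injEq]
    simp only [dyadM, vecMulVec_apply, one_mul, smul_eq_mul]
    by_cases hc : (i = k ∧ j = l) ∨ (i = j ∧ k = l)
    · simp only [hc, if_true, hcol]
      rcases hc with ⟨rfl, rfl⟩ | ⟨rfl, rfl⟩ 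
      · by_cases hij : i = j <;> simp_all
      · by_cases hik : i = k <;> simp_all
    · simp only [hc, if_false, Finset.sum_const_zero]
      rw [not_or] at hc
      simp [hc.1, hc.2]
  rw [key]
  refine add_mem (sum_mem fun m _ => phaseTwirl_mem_dyadCone ((rank_vecMulVec_le _ _).trans hr))
    (sum_mem fun p _ => dyadM_mem_dyadCone ?_)
  rw [Matrix.single_eq_single_vecMulVec_single]
  exact (rank_vecMulVec_le _ _).trans hr

lemma isotropic_mem_dyadCone {r : ℕ} (hr : r ≤ Fintype.card n) (hn : 2 ≤ Fintype.card n) :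
    ((r * (Fintype.card n - r) : ℝ) : ℂ) • (1 : Matrix (n × n) (n × n) ℂ) +
      ((r * (r * Fintype.card n - 1) : ℝ) : ℂ) • dyadM (1 : Matrix n n ℂ) ∈ dyadCone n r := by
  have : Nonempty n := Fintype.card_pos_iff.mp (by omega)
  obtain ⟨W, m₀, hW1, hW0, hW⟩ := exists_hadamard n
  obtain ⟨S, -, hS⟩ := Finset.exists_subset_card_eq (s := (Finset.univ : Finset n)) hr
  let V : Equiv.Perm n → Matrix n n ℂ := fun π => diagonal fun m => if π m ∈ S then 1 else 0
  have hV : ∀ π, (V π).rank ≤ r := fun π => by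
    rw [Matrix.rank_diagonal, Fintype.card_subtype, ← hS]
    refine Finset.card_le_card_of_injOn π (fun m hm => ?_) π.injective.injOn
    simpa using hm
  let P : Equiv.Perm n → Matrix n n ℂ := fun π => W * V π * Wᴴ
  have hP : ∀ π, (P π).rank ≤ r := fun π =>
    ((Matrix.rank_mul_le_left _ _).trans (Matrix.rank_mul_le_right _ _)).trans (hV π)
  have hPapply : ∀ π i j, P π i j =
      ∑ m, (if π m ∈ S then 1 else 0) * (W i m * star (W j m)) := fun π i j => by
    simp only [P, V, Matrix.mul_apply (M := W * _), Matrix.mul_diagonal,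
      Matrix.conjTranspose_apply]
    exact Finset.sum_congr rfl fun m _ => by ring
  have h0 : (Fintype.card n : ℂ) ≠ 0 := by
    exact_mod_cast (by omega : Fintype.card n ≠ 0)
  have h1 : (Fintype.card n : ℂ) - 1 ≠ 0 := by
    rw [sub_ne_zero]
    exact_mod_cast (by omega : Fintype.card n ≠ 1)
  have hVsum : ∀ i j k l, ∑ π, dyadM (V π) (i, j) (k, l) =
      if i = j ∧ k = l then permMoment S i k else 0 := fun i j k l => by
    simp only [dyadM, V, Matrix.diagonal_apply, permMoment]
    by_cases hij : i = j <;> by_cases hkl : k = l <;> simp [hij, hkl, apply_ite]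
  have hPsum : ∀ i j k l, ∑ π, dyadM (P π) (i, j) (k, l) =
      (Fintype.card n).factorial / (Fintype.card n * (Fintype.card n - 1)) *
        (r * (r - 1) * ((if i = j then (Fintype.card n : ℂ) else 0) *
            (if k = l then (Fintype.card n : ℂ) else 0)) +
          r * (Fintype.card n - r) *
            ∑ m, W i m * star (W j m) * star (W k m * star (W l m))) := fun i j k l => by
    simp only [dyadM, hPapply]
    rw [sum_perm_mul_star hn, hW, hW, hS]
    congr 4
    split_ifs <;> simp
  have hunit : ∀ i j, ∑ m, W i m * star (W j m) * star (W i m * star (W j m)) =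
      Fintype.card n := fun i j => by
    have : ∀ m, W i m * star (W j m) * star (W i m * star (W j m)) = 1 := fun m => by
      rw [star_mul', star_star]
      linear_combination W j m * star (W j m) * hW1 i m + hW1 j m
    simp_rw [this]
    simp
  have hdiag : ∀ i k, ∑ m, W i m * star (W i m) * star (W k m * star (W k m)) =
      Fintype.card n := fun i k => by
    simp only [hW1]
    simp
  have key : ((r * (Fintype.card n - r) : ℝ) : ℂ) • (1 : Matrix (n × n) (n × n) ℂ) +
      ((r * (r * Fintype.card n - 1) : ℝ) : ℂ) • dyadM (1 : Matrix n n ℂ) =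
      ((Fintype.card n * (Fintype.card n - 1) / (Fintype.card n).factorial : ℝ) : ℂ) •
        ∑ π, dyadM (V π) +
      (((Fintype.card n - 1) / (Fintype.card n).factorial : ℝ) : ℂ) • ∑ π, phaseTwirl (P π) := by
    ext ⟨i, j⟩ ⟨k, l⟩
    have hT : ∑ π, phaseTwirl (P π) (i, j) (k, l) = if (i = k ∧ j = l) ∨ (i = j ∧ k = l) then
        ∑ π, dyadM (P π) (i, j) (k, l) else 0 := by
      simp only [phaseTwirl, Prod.mk.injEq]
      split_ifs <;> simp
    simp only [Matrix.add_apply, Matrix.smul_apply, Matrix.sum_apply, hT, hVsum, hPsum,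
      dyadM_one_apply, Matrix.one_apply, Prod.mk.injEq, smul_eq_mul, permMoment_eq hn, hS]
    push_cast
    by_cases hij : i = j
    · subst hij
      by_cases hkl : k = l
      · subst hkl
        rw [hdiag]
        by_cases hik : i = k <;> simp only [hik, and_self, or_true, if_true, if_false] <;>
          field_simp <;> ring
      · have : ¬(i = k ∧ i = l) := fun h => hkl (h.1.symm.trans h.2)
        simp [hkl, this]
    · by_cases hik : i = k ∧ j = l
      · obtain ⟨rfl, rfl⟩ := hik
        rw [hunit]
        simp only [hij, and_self, if_true, if_false, or_false]
        field_simp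
        ring
      · simp [hij, hik]
  rw [key]
  have hn' : (0 : ℝ) ≤ Fintype.card n - 1 := by
    rw [sub_nonneg]
    exact_mod_cast (by omega : 1 ≤ Fintype.card n)
  exact add_mem
    (smul_mem_dyadCone (by positivity) (sum_mem fun π _ => dyadM_mem_dyadCone (hV π)))
    (smul_mem_dyadCone (by positivity) (sum_mem fun π _ => phaseTwirl_mem_dyadCone (hP π)))

end isotropic

/-- for `0 < α ≤ d`, `β ≥ 0` with `α + (d²-1)β = d`, the
minimum over all finite decompositions
`C_α = ∑ j, |K j⟩⟩⟨⟨K j|` of the operator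
`C_α = α (1/d)|I⟩⟩⟨⟨I| + β (I - (1/d)|I⟩⟩⟨⟨I|)` of the maximal rank
`max_j rank (K j)` equals `⌈α⌉`. -/
theorem stmt15 (d : ℕ) (hd : 2 ≤ d) (α β : ℝ)
    (hα0 : 0 < α) (hαd : α ≤ (d : ℝ)) (hβ : 0 ≤ β)
    (hnorm : α + ((d : ℝ) ^ 2 - 1) * β = (d : ℝ)) :
    IsLeast {r : ℕ |
      ∃ (t : ℕ) (K : Fin t → Matrix (Fin d) (Fin d) ℂ),
        ((α : ℂ) / (d : ℂ)) • dyadM (1 : Matrix (Fin d) (Fin d) ℂ) +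
          (β : ℂ) • ((1 : Matrix (Fin d × Fin d) (Fin d × Fin d) ℂ) -
            ((1 : ℂ) / (d : ℂ)) • dyadM (1 : Matrix (Fin d) (Fin d) ℂ)) =
          ∑ j, dyadM (K j) ∧
        ∀ j, (K j).rank ≤ r}
      ⌈α⌉₊ := by
  have hd' : (2 : ℝ) ≤ d := by exact_mod_cast hd
  have hd0 : (d : ℝ) ≠ 0 := by positivity
  have hd1 : 0 < (d : ℝ) ^ 2 - 1 := by nlinarith
  refine ⟨?_, ?_⟩
  · apply exists_sum_dyadM_of_mem_dyadCone
    set r := ⌈α⌉₊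
    have hr1 : 1 ≤ r := Nat.ceil_pos.mpr hα0
    have hr0 : (0 : ℝ) < r := by exact_mod_cast hr1
    have hrd : r ≤ d := Nat.ceil_le.mpr hαd
    have hαr : α ≤ r := Nat.le_ceil α
    have hβ' : β = (d - α) / ((d : ℝ) ^ 2 - 1) := by
      rw [eq_div_iff hd1.ne']
      linarith
    have hT₁ := isotropic_mem_dyadCone (n := Fin d) (r := r) (by simpa) (by simpa)
    have hT₂ := card_smul_one_sub_dyadM_one_mem_dyadCone (n := Fin d) hr1
    rw [Fintype.card_fin] at hT₁ hT₂
    set a := α / (r ^ 2 * ((d : ℝ) ^ 2 - 1)) with ha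
    set b := (r - α) / (r * ((d : ℝ) ^ 2 - 1)) with hb
    have hone : a * (r * (d - r)) + b * d = β := by
      rw [ha, hb, hβ']
      field_simp
      ring
    have hdyad : a * (r * (r * d - 1)) - b = α / d - β / d := by
      rw [ha, hb, hβ']
      field_simp
      ring
    have hmem := add_mem (smul_mem_dyadCone (c := a) (by positivity) hT₁)
      (smul_mem_dyadCone (c := b) (div_nonneg (by linarith) (by positivity)) hT₂)
    convert hmem using 1
    have hone' := congrArg Complex.ofReal hone
    have hdyad' := congrArg Complex.ofReal hdyad
    push_cast at hone' hdyad'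
    ext p q
    simp only [Matrix.add_apply, Matrix.sub_apply, Matrix.smul_apply, smul_eq_mul]
    push_cast
    linear_combination -(1 : Matrix (Fin d × Fin d) (Fin d × Fin d) ℂ) p q * hone' -
      dyadM (1 : Matrix (Fin d) (Fin d) ℂ) p q * hdyad'
  · rintro r ⟨t, K, hK, hrank⟩
    rw [Nat.ceil_le]
    have htrace : (d : ℝ) = ∑ s, ∑ i, ∑ j, ‖K s i j‖ ^ 2 := by
      have h := congrArg Matrix.trace hK
      simp only [Matrix.trace_add, Matrix.trace_smul, Matrix.trace_sub, Matrix.trace_sum,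
        trace_dyadM (K _), Matrix.trace_one] at h
      have hI : (dyadM (1 : Matrix (Fin d) (Fin d) ℂ)).trace = d := by
        simp [Matrix.trace, Fintype.sum_prod_type, dyadM_one_apply]
      rw [hI] at h
      apply Complex.ofReal_injective
      have hn := congrArg Complex.ofReal hnorm
      push_cast at hn h ⊢
      rw [← h]
      simp only [smul_eq_mul, Fintype.card_prod, Fintype.card_fin]
      push_cast
      field_simp
      linear_combination -hn
    have hdiag : α * d = ∑ s, ‖(K s).trace‖ ^ 2 := by
      have h := congrArg (fun M => ∑ i, ∑ k, M (i, i) (k, k)) hK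
      have hswap : ∑ i, ∑ k, ∑ s, dyadM (K s) (i, i) (k, k) =
          ∑ s, ∑ i, ∑ k, dyadM (K s) (i, i) (k, k) := by
        rw [Finset.sum_comm]
        simp_rw [Finset.sum_comm (s := Finset.univ (α := Fin d)) (t := Finset.univ (α := Fin t))]
        refine Finset.sum_congr rfl fun s _ => Finset.sum_comm
      simp only [Matrix.sum_apply, hswap, sum_dyadM_diag] at h
      apply Complex.ofReal_injective
      push_cast at h ⊢
      rw [← h]
      simp only [Matrix.add_apply, Matrix.sub_apply, Matrix.smul_apply, smul_eq_mul,
        dyadM_one_apply, Matrix.one_apply, Prod.mk.injEq, and_self, if_true,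
        Finset.sum_add_distrib, mul_sub, Finset.sum_sub_distrib, ← Finset.mul_sum,
        Finset.sum_ite_eq, Finset.mem_univ, Finset.sum_const, Finset.card_univ, Fintype.card_fin,
        nsmul_eq_mul]
      field_simp
      ring
    have hle : α * d ≤ r * d := by
      conv_rhs => rw [htrace]
      rw [hdiag, Finset.mul_sum]
      refine Finset.sum_le_sum fun s _ => (norm_trace_sq_le_rank_mul (K s)).trans ?_
      gcongr
      exact hrank s
    exact le_of_mul_le_mul_right hle (by positivity)

end
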